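/- Let (v¹, v², ξ₁, ξ₂, ξ₃) be a classical solution of the forward coupled observer system on [0,T]. Then for every t ∈ [0,T]: ∫₀¹ (|∂ₓv¹(t,x)|² + |v²(t,x)|²) dx + γ₁·ξ₂(t)² + γ₁ω²·ξ₁(t)² + 2γ₁γ₂ω² · ∫₀ᵗ ξ₁(s)² ds = ∫₀¹ (|∂ₓv¹(0,x)|² + |v²(0,x)|²) dx + γ₁·ξ₂(0)² + γ₁ω²·ξ₁(0)². (This is the first energy identity of Proposition 3.) -/

import Mathlib

open Set Filter MeasureTheory intervalIntegral

/-- A classical solution of the forward coupled observer system on `[0,T]`: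
`∂ₜv¹ = v²`, `∂ₜv² = ∂ₓₓv¹` on `[0,T] × [0,1]`, boundary conditions `v¹(t,1) = 0`,
`v¹(t,0) = γ₁ξ₁(t) + γ₁γ₂ξ₃(t)`, and the observer ODEs `ξ₁' = ξ₂ − γ₂ξ₁`,
`ξ₂' = −ω²ξ₁ + ∂ₓv¹(·,0)`, `ξ₃' = ξ₁` on `[0,T]`. -/
structure FwdObserverSol (T ω γ₁ γ₂ : ℝ) where
  v1 : ℝ → ℝ → ℝ
  v2 : ℝ → ℝ → ℝ
  ξ1 : ℝ → ℝ
  ξ2 : ℝ → ℝ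
  ξ3 : ℝ → ℝ
  smooth_v1 : ContDiff ℝ 2 (Function.uncurry v1)
  smooth_v2 : ContDiff ℝ 2 (Function.uncurry v2)
  smooth_ξ1 : ContDiff ℝ 1 ξ1
  smooth_ξ2 : ContDiff ℝ 1 ξ2
  smooth_ξ3 : ContDiff ℝ 1 ξ3
  pde1 : ∀ t ∈ Icc (0:ℝ) T, ∀ x ∈ Icc (0:ℝ) 1, deriv (fun s => v1 s x) t = v2 t x
  pde2 : ∀ t ∈ Icc (0:ℝ) T, ∀ x ∈ Icc (0:ℝ) 1,
    deriv (fun s => v2 s x) t = deriv (deriv (fun y => v1 t y)) x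
  bc1 : ∀ t ∈ Icc (0:ℝ) T, v1 t 1 = 0
  bc0 : ∀ t ∈ Icc (0:ℝ) T, v1 t 0 = γ₁ * ξ1 t + γ₁ * γ₂ * ξ3 t
  ode1 : ∀ t ∈ Icc (0:ℝ) T, deriv ξ1 t = ξ2 t - γ₂ * ξ1 t
  ode2 : ∀ t ∈ Icc (0:ℝ) T, deriv ξ2 t = -ω ^ 2 * ξ1 t + deriv (fun y => v1 t y) 0
  ode3 : ∀ t ∈ Icc (0:ℝ) T, deriv ξ3 t = ξ1 t

/-!
Along the first-order wave system `∂ₜp = ∂ₓq`, `∂ₜq = ∂ₓp`, the density `‖p‖² + ‖q‖²` satisfies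
the local conservation law `∂ₜ(‖p‖² + ‖q‖²) = ∂ₓ(2⟪p, q⟫)`, so the wave energy changes only through
the boundary. Apply this to `p = ∂ₓv¹` and `q = v²`. Differentiating the boundary conditions in
time gives `v²(t,1) = 0` and `v²(t,0) = γ₁ξ₂(t)`: the integral term `γ₁γ₂ξ₃` is what cancels the
damping in `ξ₁'`. The boundary contribution `-2γ₁ξ₂∂ₓv¹(t,0)` to the wave energy balance is then
compensated by the derivative of `γ₁ξ₂²`, and only the dissipation `-2γ₁γ₂ω²ξ₁²` survives.
-/

section PartialDerivatives

variable {𝕜 E F : Type*} [NormedAddCommGroup F]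

section NontriviallyNormedField

variable [NontriviallyNormedField 𝕜] [NormedAddCommGroup E] [NormedSpace 𝕜 E] [NormedSpace 𝕜 F]

lemma hasDerivAt_comp_prodMk_right {f : 𝕜 × E → F} {f' : 𝕜 × E →L[𝕜] F} {t : 𝕜} {x : E}
    (hf : HasFDerivAt f f' (t, x)) : HasDerivAt (fun s => f (s, x)) (f' (1, 0)) t :=
  hf.comp_hasDerivAt (f := fun s => (s, x)) t
    ((hasDerivAt_id t).prodMk (hasDerivAt_const t x))

lemma hasDerivAt_comp_prodMk_left {f : E × 𝕜 → F} {f' : E × 𝕜 →L[𝕜] F} {t : E} {x : 𝕜}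
    (hf : HasFDerivAt f f' (t, x)) : HasDerivAt (fun y => f (t, y)) (f' (0, 1)) x :=
  hf.comp_hasDerivAt (f := fun y => (t, y)) x
    ((hasDerivAt_const x t).prodMk (hasDerivAt_id x))

lemma hasDerivAt_fst_of_differentiableAt_uncurry {f : 𝕜 → E → F} {t : 𝕜} {x : E}
    (hf : DifferentiableAt 𝕜 (Function.uncurry f) (t, x)) :
    HasDerivAt (fun s => f s x) (deriv (fun s => f s x) t) t :=
  (hasDerivAt_comp_prodMk_right hf.hasFDerivAt).differentiableAt.hasDerivAt

lemma hasDerivAt_snd_of_differentiableAt_uncurry {f : E → 𝕜 → F} {t : E} {x : 𝕜}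
    (hf : DifferentiableAt 𝕜 (Function.uncurry f) (t, x)) :
    HasDerivAt (f t) (deriv (f t) x) x :=
  (hasDerivAt_comp_prodMk_left hf.hasFDerivAt).differentiableAt.hasDerivAt

lemma contDiff_uncurry_deriv_fst {n : WithTop ℕ∞} {f : 𝕜 → E → F}
    (hf : ContDiff 𝕜 (n + 1) (Function.uncurry f)) :
    ContDiff 𝕜 n (Function.uncurry fun t x => deriv (fun s => f s x) t) := by
  have hswap : ContDiff 𝕜 (n + 1) (Function.uncurry fun (z : 𝕜 × E) s => f s z.2) :=
    hf.comp (contDiff_snd.prodMk (contDiff_snd.comp contDiff_fst))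
  exact hswap.fderiv_apply contDiff_fst contDiff_const le_rfl

lemma contDiff_uncurry_deriv_snd {n : WithTop ℕ∞} {f : E → 𝕜 → F}
    (hf : ContDiff 𝕜 (n + 1) (Function.uncurry f)) :
    ContDiff 𝕜 n (Function.uncurry fun t => deriv (f t)) := by
  have hlift : ContDiff 𝕜 (n + 1) (Function.uncurry fun (z : E × 𝕜) => f z.1) :=
    hf.comp ((contDiff_fst.comp contDiff_fst).prodMk contDiff_snd)
  exact hlift.fderiv_apply contDiff_snd contDiff_const le_rfl

end NontriviallyNormedField

lemma deriv_deriv_comm [RCLike 𝕜] [NormedSpace 𝕜 F] {f : 𝕜 → 𝕜 → F}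
    (hf : ContDiff 𝕜 2 (Function.uncurry f)) (t x : 𝕜) :
    deriv (fun s => deriv (f s) x) t = deriv (fun y => deriv (fun s => f s y) t) x := by
  have hf' (z : 𝕜 × 𝕜) := (hf.differentiable two_ne_zero z).hasFDerivAt
  have hfst (s y : 𝕜) : deriv (fun r => f r y) s = fderiv 𝕜 (Function.uncurry f) (s, y) (1, 0) :=
    (hasDerivAt_comp_prodMk_right (hf' (s, y))).deriv
  have hsnd (s y : 𝕜) : deriv (f s) y = fderiv 𝕜 (Function.uncurry f) (s, y) (0, 1) :=
    (hasDerivAt_comp_prodMk_left (hf' (s, y))).deriv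
  have hf'' (v : 𝕜 × 𝕜) : HasFDerivAt (fun z => fderiv 𝕜 (Function.uncurry f) z v)
      ((fderiv 𝕜 (fderiv 𝕜 (Function.uncurry f)) (t, x)).flip v) (t, x) := by
    simpa using ((hf.fderiv_right (m := 1) le_rfl).differentiable one_ne_zero
      (t, x)).hasFDerivAt.clm_apply (hasFDerivAt_const v _)
  simp only [hfst, hsnd]
  rw [(hasDerivAt_comp_prodMk_right (hf'' (0, 1))).deriv,
    (hasDerivAt_comp_prodMk_left (hf'' (1, 0))).deriv]
  exact hf.contDiffAt.isSymmSndFDerivAt (by simp) (1, 0) (0, 1)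

lemma hasDerivAt_intervalIntegral_of_contDiff [NormedSpace ℝ F] {f : ℝ → ℝ → F}
    (hf : ContDiff ℝ 1 (Function.uncurry f)) (a b t : ℝ) :
    HasDerivAt (fun s => ∫ x in a..b, f s x) (∫ x in a..b, deriv (fun s => f s x) t) t := by
  have hderiv : Continuous (Function.uncurry fun s x => deriv (fun r => f r x) s) :=
    (contDiff_uncurry_deriv_fst (n := 0) (by simpa using hf)).continuous
  obtain ⟨C, hC⟩ := ((isCompact_closedBall t 1).prod isCompact_uIcc).exists_bound_of_continuousOn
    (s := Metric.closedBall t 1 ×ˢ uIcc a b) hderiv.continuousOn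
  exact (hasDerivAt_integral_of_dominated_loc_of_deriv_le (bound := fun _ => C)
    (Metric.closedBall_mem_nhds t one_pos)
    (.of_forall fun s => (hf.continuous.uncurry_left s).aestronglyMeasurable)
    ((hf.continuous.uncurry_left t).intervalIntegrable a b)
    (hderiv.uncurry_left t).aestronglyMeasurable
    (.of_forall fun x hx s hs => hC (s, x) ⟨hs, uIoc_subset_uIcc hx⟩)
    intervalIntegrable_const
    (.of_forall fun x _ s _ => hasDerivAt_fst_of_differentiableAt_uncurry
      (hf.differentiable one_ne_zero (s, x)))).2

end PartialDerivatives

section WaveSystem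

variable {H : Type*} [NormedAddCommGroup H] {p q : ℝ → ℝ → H}

/-- The energy (without the customary factor `1/2`) on `[a, b]` at time `t` of a pair `(p, q)`
solving the first-order wave system `∂ₜp = ∂ₓq`, `∂ₜq = ∂ₓp`; for a solution `u` of the wave
equation, `p = ∂ₓu` and `q = ∂ₜu`. -/
noncomputable def waveEnergy (p q : ℝ → ℝ → H) (a b t : ℝ) : ℝ :=
  ∫ x in a..b, (‖p t x‖ ^ 2 + ‖q t x‖ ^ 2)

lemma continuous_waveEnergy (hp : Continuous (Function.uncurry p))
    (hq : Continuous (Function.uncurry q)) (a b : ℝ) : Continuous (waveEnergy p q a b) :=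
  continuous_parametric_intervalIntegral_of_continuous' ((hp.norm.pow 2).add (hq.norm.pow 2)) a b

variable [InnerProductSpace ℝ H]

lemma hasDerivAt_waveFlux {t x : ℝ} (hp : DifferentiableAt ℝ (Function.uncurry p) (t, x))
    (hq : DifferentiableAt ℝ (Function.uncurry q) (t, x))
    (hpq : deriv (fun s => p s x) t = deriv (q t) x)
    (hqp : deriv (fun s => q s x) t = deriv (p t) x) :
    HasDerivAt (fun y => 2 * inner ℝ (p t y) (q t y))
      (deriv (fun s => ‖p s x‖ ^ 2 + ‖q s x‖ ^ 2) t) x := by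
  have hpt := hasDerivAt_fst_of_differentiableAt_uncurry hp
  have hqt := hasDerivAt_fst_of_differentiableAt_uncurry hq
  have hpx := hasDerivAt_snd_of_differentiableAt_uncurry hp
  have hqx := hasDerivAt_snd_of_differentiableAt_uncurry hq
  have hdensity : deriv (fun s => ‖p s x‖ ^ 2 + ‖q s x‖ ^ 2) t
      = 2 * inner ℝ (p t x) (deriv (q t) x) + 2 * inner ℝ (q t x) (deriv (p t) x) := by
    rw [← hpq, ← hqp]
    exact (hpt.norm_sq.add hqt.norm_sq).deriv
  rw [hdensity, real_inner_comm (deriv (p t) x), ← mul_add]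
  exact (hpx.inner ℝ hqx).const_mul 2

lemma hasDerivAt_waveEnergy (hp : ContDiff ℝ 1 (Function.uncurry p))
    (hq : ContDiff ℝ 1 (Function.uncurry q)) {a b t : ℝ} (hab : a ≤ b)
    (hpq : ∀ x ∈ Ioo a b, deriv (fun s => p s x) t = deriv (q t) x)
    (hqp : ∀ x ∈ Ioo a b, deriv (fun s => q s x) t = deriv (p t) x) :
    HasDerivAt (waveEnergy p q a b)
      (2 * inner ℝ (p t b) (q t b) - 2 * inner ℝ (p t a) (q t a)) t := by
  have hdensity : ContDiff ℝ 1 (Function.uncurry fun s x => ‖p s x‖ ^ 2 + ‖q s x‖ ^ 2) :=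
    (hp.norm_sq ℝ).add (hq.norm_sq ℝ)
  have hderiv : Continuous fun x => deriv (fun s => ‖p s x‖ ^ 2 + ‖q s x‖ ^ 2) t :=
    (contDiff_uncurry_deriv_fst (n := 0) (by simpa using hdensity)).continuous.uncurry_left t
  have hflux : Continuous fun x => 2 * inner ℝ (p t x) (q t x) :=
    continuous_const.mul ((hp.continuous.uncurry_left t).inner (hq.continuous.uncurry_left t))
  rw [← integral_eq_sub_of_hasDerivAt_of_le hab hflux.continuousOn
    (fun x hx => hasDerivAt_waveFlux (hp.differentiable one_ne_zero (t, x))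
      (hq.differentiable one_ne_zero (t, x)) (hpq x hx) (hqp x hx))
    (hderiv.intervalIntegrable a b)]
  exact hasDerivAt_intervalIntegral_of_contDiff hdensity a b t

end WaveSystem

namespace FwdObserverSol

variable {T ω γ₁ γ₂ : ℝ} (S : FwdObserverSol T ω γ₁ γ₂) {t : ℝ}

lemma hasDerivAt_ξ1 (ht : t ∈ Icc 0 T) : HasDerivAt S.ξ1 (S.ξ2 t - γ₂ * S.ξ1 t) t :=
  S.ode1 t ht ▸ (S.smooth_ξ1.differentiable one_ne_zero t).hasDerivAt

lemma hasDerivAt_ξ2 (ht : t ∈ Icc 0 T) :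
    HasDerivAt S.ξ2 (-ω ^ 2 * S.ξ1 t + deriv (S.v1 t) 0) t :=
  S.ode2 t ht ▸ (S.smooth_ξ2.differentiable one_ne_zero t).hasDerivAt

lemma hasDerivAt_ξ3 (ht : t ∈ Icc 0 T) : HasDerivAt S.ξ3 (S.ξ1 t) t :=
  S.ode3 t ht ▸ (S.smooth_ξ3.differentiable one_ne_zero t).hasDerivAt

lemma contDiff_uncurry_deriv_v1 : ContDiff ℝ 1 (Function.uncurry fun t => deriv (S.v1 t)) :=
  contDiff_uncurry_deriv_snd S.smooth_v1

lemma contDiff_one_uncurry_v2 : ContDiff ℝ 1 (Function.uncurry S.v2) :=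
  S.smooth_v2.of_le one_le_two

lemma deriv_deriv_v1_eq_deriv_v2 (ht : t ∈ Icc 0 T) {x : ℝ} (hx : x ∈ Ioo (0 : ℝ) 1) :
    deriv (fun s => deriv (S.v1 s) x) t = deriv (S.v2 t) x := by
  have hv : (fun y => deriv (fun s => S.v1 s y) t) =ᶠ[nhds x] S.v2 t := by
    filter_upwards [Ioo_mem_nhds hx.1 hx.2] with y hy
    exact S.pde1 t ht y (Ioo_subset_Icc_self hy)
  rw [deriv_deriv_comm S.smooth_v1, hv.deriv_eq]

lemma v2_one (ht : t ∈ Ioo 0 T) : S.v2 t 1 = 0 := by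
  have hbc : (fun s => S.v1 s 1) =ᶠ[nhds t] fun _ => 0 := by
    filter_upwards [Ioo_mem_nhds ht.1 ht.2] with s hs
    exact S.bc1 s (Ioo_subset_Icc_self hs)
  rw [← S.pde1 t (Ioo_subset_Icc_self ht) 1 unitInterval.one_mem, hbc.deriv_eq, deriv_const]

lemma v2_zero (ht : t ∈ Ioo 0 T) : S.v2 t 0 = γ₁ * S.ξ2 t := by
  have ht' := Ioo_subset_Icc_self ht
  have hbc : (fun s => S.v1 s 0) =ᶠ[nhds t] fun s => γ₁ * S.ξ1 s + γ₁ * γ₂ * S.ξ3 s := by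
    filter_upwards [Ioo_mem_nhds ht.1 ht.2] with s hs
    exact S.bc0 s (Ioo_subset_Icc_self hs)
  have hderiv := ((S.hasDerivAt_ξ1 ht').const_mul γ₁).fun_add
    ((S.hasDerivAt_ξ3 ht').const_mul (γ₁ * γ₂))
  rw [← S.pde1 t ht' 0 unitInterval.zero_mem, hbc.deriv_eq, hderiv.deriv]
  ring

lemma hasDerivAt_waveEnergy_v1_v2 (ht : t ∈ Ioo 0 T) :
    HasDerivAt (waveEnergy (fun s => deriv (S.v1 s)) S.v2 0 1)
      (-(2 * γ₁ * S.ξ2 t * deriv (S.v1 t) 0)) t := by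
  have ht' := Ioo_subset_Icc_self ht
  refine (hasDerivAt_waveEnergy S.contDiff_uncurry_deriv_v1 S.contDiff_one_uncurry_v2 zero_le_one
    (fun x hx => S.deriv_deriv_v1_eq_deriv_v2 ht' hx)
    (fun x hx => S.pde2 t ht' x (Ioo_subset_Icc_self hx))).congr_deriv ?_
  rw [S.v2_one ht, S.v2_zero ht, inner_zero_right, Real.inner_apply]
  ring

/-- The energy of the coupled system: that of the wave component `(∂ₓv¹, v²)` on `[0,1]` plus that
of the oscillator `(ξ₁, ξ₂)`, weighted by the gain `γ₁`. -/
noncomputable def energy (t : ℝ) : ℝ :=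
  waveEnergy (fun s => deriv (S.v1 s)) S.v2 0 1 t + γ₁ * S.ξ2 t ^ 2 + γ₁ * ω ^ 2 * S.ξ1 t ^ 2

lemma continuous_energy : Continuous S.energy :=
  ((continuous_waveEnergy S.contDiff_uncurry_deriv_v1.continuous S.smooth_v2.continuous 0 1).add
    ((S.smooth_ξ2.continuous.pow 2).const_mul γ₁)).add
    ((S.smooth_ξ1.continuous.pow 2).const_mul (γ₁ * ω ^ 2))

lemma hasDerivAt_energy (ht : t ∈ Ioo 0 T) :
    HasDerivAt S.energy (-(2 * γ₁ * γ₂ * ω ^ 2 * S.ξ1 t ^ 2)) t := by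
  have ht' := Ioo_subset_Icc_self ht
  refine (((S.hasDerivAt_waveEnergy_v1_v2 ht).fun_add
    (((S.hasDerivAt_ξ2 ht').fun_pow 2).const_mul γ₁)).fun_add
    (((S.hasDerivAt_ξ1 ht').fun_pow 2).const_mul (γ₁ * ω ^ 2))).congr_deriv ?_
  push_cast
  ring

end FwdObserverSol

theorem forward_energy_identity_general {T ω γ₁ γ₂ : ℝ} (S : FwdObserverSol T ω γ₁ γ₂) {t : ℝ}
    (ht : t ∈ Icc 0 T) :
    S.energy t + 2 * γ₁ * γ₂ * ω ^ 2 * ∫ s in (0 : ℝ)..t, S.ξ1 s ^ 2 = S.energy 0 := by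
  have hdissipation : Continuous fun s => -(2 * γ₁ * γ₂ * ω ^ 2 * S.ξ1 s ^ 2) :=
    ((S.smooth_ξ1.continuous.pow 2).const_mul _).neg
  have hbalance := integral_eq_sub_of_hasDerivAt_of_le ht.1 S.continuous_energy.continuousOn
    (fun s hs => S.hasDerivAt_energy (Ioo_subset_Ioo_right ht.2 hs))
    (hdissipation.intervalIntegrable 0 t)
  rw [intervalIntegral.integral_neg, intervalIntegral.integral_const_mul] at hbalance
  linarith

/-- first energy identity of Proposition 3. -/
theorem forward_energy_identity
    (T ω γ₁ γ₂ : ℝ) (hT : 0 < T) (hγ₁ : 0 < γ₁) (hγ₂ : 0 < γ₂)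
    (S : FwdObserverSol T ω γ₁ γ₂) :
    ∀ t ∈ Icc (0:ℝ) T,
      (∫ x in (0:ℝ)..1, ((deriv (fun y => S.v1 t y) x) ^ 2 + (S.v2 t x) ^ 2))
        + γ₁ * (S.ξ2 t) ^ 2 + γ₁ * ω ^ 2 * (S.ξ1 t) ^ 2
        + 2 * γ₁ * γ₂ * ω ^ 2 * ∫ s in (0:ℝ)..t, (S.ξ1 s) ^ 2
      = (∫ x in (0:ℝ)..1, ((deriv (fun y => S.v1 0 y) x) ^ 2 + (S.v2 0 x) ^ 2))
        + γ₁ * (S.ξ2 0) ^ 2 + γ₁ * ω ^ 2 * (S.ξ1 0) ^ 2 := by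
  intro t ht
  simpa only [FwdObserverSol.energy, waveEnergy, Real.norm_eq_abs, sq_abs]
    using forward_energy_identity_general S ht
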